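/- arXiv:1811.09726 — 2 statements merged into one kernel-verified Lean document; each statement's English description precedes it below -/
import Mathlib

section
/- Let $N$ be a positive natural number, let $r$ be a natural number, and let $p$ be a real number with $0 \leq p \leq 1$ and $r \leq pN$. Then the binomial tail satisfies $\sum_{k=0}^{r} \binom{N}{k} p^k (1-p)^{N-k} \leq e^{-2t^2 N}$, where $t = p - r/N$. -/
/-!
Hoeffding's lemma makes a centred Bernoulli variable sub-Gaussian with parameter `1 / 4`. The moment
generating function of `Bin(n, p)` is the `n`-th power of that of a Bernoulli variable, so a centred
binomial variable is sub-Gaussian with parameter `n / 4`, and the Chernoff bound gives the tail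
estimate `exp (-2 * ε ^ 2 / n)` for a deviation `ε`.
-/

section BinomialTail

open MeasureTheory ProbabilityTheory Real
open scoped unitInterval

lemma hasSubgaussianMGF_bernoulliMeasure (x y : ℝ) (p : I) :
    HasSubgaussianMGF (fun z ↦ z - (p * x + (1 - p) * y)) ((‖x - y‖₊ / 2) ^ 2) Ber(x, y, p) := by
  have mean_eq : ∫ z, z ∂Ber(x, y, p) = p * x + (1 - p) * y := integral_bernoulliMeasure x y p _
  have ae_mem_Icc : ∀ᵐ z ∂Ber(x, y, p), z ∈ Set.Icc (min x y) (max x y) := by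
    refine (mem_ae_iff_prob_eq_one measurableSet_Icc).2 ?_
    exact bernoulliMeasure_apply_of_mem_of_mem p measurableSet_Icc (by simp) (by simp)
  have width_eq : ‖max x y - min x y‖₊ = ‖x - y‖₊ := by
    rw [max_sub_min_eq_abs', ← Real.norm_eq_abs, nnnorm_norm]
  simpa only [id_eq, mean_eq, width_eq] using
    hasSubgaussianMGF_of_mem_Icc aemeasurable_id ae_mem_Icc

lemma mgf_natCast_binomial (n : ℕ) (p : I) (t : ℝ) :
    mgf (fun k : ℕ ↦ (k : ℝ)) Bin(n, p) t = mgf id Ber((1 : ℝ), 0, p) t ^ n := by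
  simp only [mgf, integral_binomial, integral_bernoulliMeasure, id_eq, smul_eq_mul, mul_one,
    mul_zero, exp_zero]
  rw [add_pow, ← Nat.range_succ_eq_Iic]
  refine Finset.sum_congr rfl fun k _ ↦ ?_
  rw [mul_comm t, exp_nat_mul, mul_pow]
  ring

lemma mgf_natCast_sub_binomial (n : ℕ) (p : I) (a t : ℝ) :
    mgf (fun k : ℕ ↦ (k : ℝ) - n * a) Bin(n, p) t =
      mgf (fun x ↦ x - a) Ber((1 : ℝ), 0, p) t ^ n := by
  calc mgf (fun k : ℕ ↦ (k : ℝ) - n * a) Bin(n, p) t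
      = mgf id Ber((1 : ℝ), 0, p) t ^ n * exp (t * -(n * a)) := by
        simp only [sub_eq_add_neg, mgf_add_const, mgf_natCast_binomial]
    _ = (mgf id Ber((1 : ℝ), 0, p) t * exp (t * -a)) ^ n := by
        rw [mul_pow, ← exp_nat_mul]
        ring_nf
    _ = mgf (fun x ↦ x - a) Ber((1 : ℝ), 0, p) t ^ n := by
        simp only [sub_eq_add_neg, ← mgf_add_const, id_eq]

lemma hasSubgaussianMGF_binomial (n : ℕ) (p : I) :
    HasSubgaussianMGF (fun k : ℕ ↦ (k : ℝ) - n * p) (n / 4) Bin(n, p) where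
  integrable_exp_mul _ := integrable_binomial _
  mgf_le t := by
    have bernoulli_mgf_le : mgf (fun x ↦ x - p) Ber((1 : ℝ), 0, p) t ≤ exp (t ^ 2 / 8) := by
      convert (hasSubgaussianMGF_bernoulliMeasure 1 0 p).mgf_le t using 2
      · simp
      · norm_num
        ring
    calc mgf (fun k : ℕ ↦ (k : ℝ) - n * p) Bin(n, p) t
        = mgf (fun x ↦ x - p) Ber((1 : ℝ), 0, p) t ^ n := mgf_natCast_sub_binomial n p p t
      _ ≤ exp (t ^ 2 / 8) ^ n := pow_le_pow_left₀ mgf_nonneg bernoulli_mgf_le n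
      _ = exp ((n / 4 : NNReal) * t ^ 2 / 2) := by
        rw [← exp_nat_mul]
        push_cast
        ring_nf

theorem binomial_real_le_sub_le_exp (n : ℕ) (p : I) {ε : ℝ} (hε : 0 ≤ ε) :
    Bin(n, p).real {k | (k : ℝ) ≤ n * p - ε} ≤ exp (-2 * ε ^ 2 / n) := by
  have event_eq : {k : ℕ | (k : ℝ) ≤ n * p - ε} = {k : ℕ | ε ≤ -((k : ℝ) - n * p)} := by
    ext k
    simp only [Set.mem_ofPred_eq, neg_sub, le_sub_comm]
  have exponent_eq : -2 * ε ^ 2 / n = -ε ^ 2 / (2 * (n / 4 : NNReal)) := by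
    push_cast
    ring
  rw [event_eq, exponent_eq]
  exact (hasSubgaussianMGF_binomial n p).neg.measure_ge_le hε

lemma binomial_real_coe_finset (n : ℕ) (p : I) (s : Finset ℕ) :
    Bin(n, p).real s = ∑ k ∈ s, (n.choose k : ℝ) * p ^ k * (1 - p) ^ (n - k) := by
  simp only [← sum_measureReal_singleton, binomial_real_singleton]

end BinomialTail

open Finset in
/-- Hoeffding's inequality for the binomial distribution: if `0 ≤ p ≤ 1` and `r ≤ pN`,
then the probability that a binomial random variable with parameters `N`, `p` is at most
`r` is bounded by `exp (-2 t² N)` with `t = p - r/N`. -/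
theorem stmt_3 (N r : ℕ) (hN : 0 < N) (p : ℝ) (hp0 : 0 ≤ p) (hp1 : p ≤ 1)
    (hr : (r : ℝ) ≤ p * N) :
    ∑ k ∈ range (r + 1), (N.choose k : ℝ) * p ^ k * (1 - p) ^ (N - k) ≤
      Real.exp (-2 * (p - r / N) ^ 2 * N) := by
  lift p to unitInterval using ⟨hp0, hp1⟩
  have deviation_nonneg : 0 ≤ N * (p : ℝ) - r := by linarith
  have tail_le := binomial_real_le_sub_le_exp N p deviation_nonneg
  have event_eq : {k : ℕ | (k : ℝ) ≤ N * p - (N * p - r)} = range (r + 1) := by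
    ext k
    simp
  have exponent_eq : -2 * (N * (p : ℝ) - r) ^ 2 / N = -2 * (p - r / N) ^ 2 * N := by
    field_simp
  rwa [event_eq, binomial_real_coe_finset, exponent_eq] at tail_le
end

section
/- Fix a real number $p$ with $0 < p \leq 1$. Then $\sum_{k=0}^{5n-15} \binom{N}{k} p^k (1-p)^{N-k} \to 0$ as $n \to \infty$, where $N = \binom{n}{2}$. (In the Gilbert random graph model $G(n,p)$, this sum is the probability that a graph on $n$ vertices has at most $5n-15$ edges; hence by Mader's theorem the probability that $G(n,p)$ is not intrinsically knotted tends to $0$.) -/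
/-!
Exponential tilting: if `0 ≤ x ≤ 1`, then multiplying the sum of the terms with `k ≤ r` by `x ^ r`
gives at most the full binomial expansion of `(x * a + b) ^ N`. When `b < 1`, pick `b < y < 1` and
tilt by a power `x = y ^ m` so small that `x * a + b < y`; the sum is then at most
`y ^ (N - m * r)`, which tends to `0` as soon as `N → ∞` and `r = o(N)`. For graphs, `N` is
quadratic and `r` linear in the number of vertices.
-/

section BinomialSums

open Finset

theorem sum_choose_mul_pow_mul_pow_le_add_pow {R : Type*} [CommSemiring R] [PartialOrder R]
    [IsOrderedRing R] {a b : R} (ha : 0 ≤ a) (hb : 0 ≤ b) (N : ℕ) (s : Finset ℕ) :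
    ∑ k ∈ s, (N.choose k : R) * a ^ k * b ^ (N - k) ≤ (a + b) ^ N := by
  have term_nonneg (k : ℕ) : 0 ≤ (N.choose k : R) * a ^ k * b ^ (N - k) := by positivity
  have term_eq_zero (k : ℕ) (hk : k ∉ range (N + 1)) :
      (N.choose k : R) * a ^ k * b ^ (N - k) = 0 := by
    rw [Nat.choose_eq_zero_of_lt (by simpa using hk)]
    simp
  calc ∑ k ∈ s, (N.choose k : R) * a ^ k * b ^ (N - k)
      ≤ ∑ k ∈ s ∪ range (N + 1), (N.choose k : R) * a ^ k * b ^ (N - k) :=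
        sum_le_sum_of_subset_of_nonneg subset_union_left fun k _ _ => term_nonneg k
    _ = ∑ k ∈ range (N + 1), (N.choose k : R) * a ^ k * b ^ (N - k) :=
        (sum_subset subset_union_right fun k _ hk => term_eq_zero k hk).symm
    _ = (a + b) ^ N := by
        rw [add_pow]
        exact sum_congr rfl fun k _ => by ring

theorem pow_mul_sum_range_choose_le_add_pow {R : Type*} [CommSemiring R] [PartialOrder R]
    [IsOrderedRing R] {a b x : R} (ha : 0 ≤ a) (hb : 0 ≤ b) (hx₀ : 0 ≤ x) (hx₁ : x ≤ 1)
    (N r : ℕ) :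
    x ^ r * ∑ k ∈ range (r + 1), (N.choose k : R) * a ^ k * b ^ (N - k) ≤ (x * a + b) ^ N := by
  calc x ^ r * ∑ k ∈ range (r + 1), (N.choose k : R) * a ^ k * b ^ (N - k)
      ≤ ∑ k ∈ range (r + 1), x ^ k * ((N.choose k : R) * a ^ k * b ^ (N - k)) := by
        rw [mul_sum]
        refine sum_le_sum fun k hk => mul_le_mul_of_nonneg_right ?_ (by positivity)
        exact pow_le_pow_of_le_one hx₀ hx₁ (mem_range_succ_iff.mp hk)
    _ = ∑ k ∈ range (r + 1), (N.choose k : R) * (x * a) ^ k * b ^ (N - k) :=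
        sum_congr rfl fun k _ => by ring
    _ ≤ (x * a + b) ^ N :=
        sum_choose_mul_pow_mul_pow_le_add_pow (mul_nonneg hx₀ ha) hb N _

theorem norm_sum_choose_mul_pow_mul_pow_le {R : Type*} [SeminormedRing R] [NormOneClass R]
    (a b : R) (N : ℕ) (s : Finset ℕ) :
    ‖∑ k ∈ s, (N.choose k : R) * a ^ k * b ^ (N - k)‖ ≤
      ∑ k ∈ s, (N.choose k : ℝ) * ‖a‖ ^ k * ‖b‖ ^ (N - k) := by
  refine norm_sum_le_of_le s fun k _ => ?_
  calc ‖(N.choose k : R) * a ^ k * b ^ (N - k)‖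
      ≤ ‖(N.choose k : R)‖ * ‖a ^ k‖ * ‖b ^ (N - k)‖ := norm_mul₃_le
    _ ≤ (N.choose k : ℝ) * ‖a‖ ^ k * ‖b‖ ^ (N - k) := by
        gcongr
        · simpa using Nat.norm_cast_le (α := R) (N.choose k)
        · exact norm_pow_le a k
        · exact norm_pow_le b (N - k)

end BinomialSums

open Filter Asymptotics Topology

theorem exists_pow_mul_add_lt {b y : ℝ} (a : ℝ) (hy₀ : 0 ≤ y) (hy₁ : y < 1) (hby : b < y) :
    ∃ m : ℕ, y ^ m * a + b < y := by
  have tendsto_b : Tendsto (fun m : ℕ => y ^ m * a + b) atTop (𝓝 b) := by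
    simpa using ((tendsto_pow_atTop_nhds_zero_of_lt_one hy₀ hy₁).mul_const a).add_const b
  exact (tendsto_b.eventually_lt_const hby).exists

theorem exists_sum_range_choose_le_pow_sub {a b : ℝ} (ha : 0 ≤ a) (hb₀ : 0 ≤ b) (hb₁ : b < 1) :
    ∃ y : ℝ, 0 < y ∧ y < 1 ∧ ∃ m : ℕ, ∀ N r : ℕ, m * r ≤ N →
      ∑ k ∈ Finset.range (r + 1), (N.choose k : ℝ) * a ^ k * b ^ (N - k) ≤ y ^ (N - m * r) := by
  obtain ⟨y, hby, hy₁⟩ := exists_between hb₁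
  have hy₀ : 0 < y := hb₀.trans_lt hby
  obtain ⟨m, hm⟩ := exists_pow_mul_add_lt a hy₀.le hy₁ hby
  refine ⟨y, hy₀, hy₁, m, fun N r hmr => le_of_mul_le_mul_left ?_ (pow_pos hy₀ (m * r))⟩
  calc y ^ (m * r) * ∑ k ∈ Finset.range (r + 1), (N.choose k : ℝ) * a ^ k * b ^ (N - k)
      ≤ (y ^ m * a + b) ^ N := by
        rw [pow_mul]
        exact pow_mul_sum_range_choose_le_add_pow ha hb₀ (by positivity)
          (pow_le_one₀ hy₀.le hy₁.le) N r
    _ ≤ y ^ N := by gcongr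
    _ = y ^ (m * r) * y ^ (N - m * r) := (pow_mul_pow_sub y hmr).symm

section Growth

variable {ι : Type*} {l : Filter ι} {r N : ι → ℕ}

theorem eventually_mul_le_of_isLittleO_natCast
    (hr : (fun i => (r i : ℝ)) =o[l] fun i => (N i : ℝ)) (m : ℕ) : ∀ᶠ i in l, m * r i ≤ N i := by
  filter_upwards [isLittleO_iff_nat_mul_le.mp hr m] with i hi
  simp only [Real.norm_natCast] at hi
  exact_mod_cast hi

theorem tendsto_sub_mul_atTop_of_isLittleO_natCast (hN : Tendsto N l atTop)
    (hr : (fun i => (r i : ℝ)) =o[l] fun i => (N i : ℝ)) (m : ℕ) :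
    Tendsto (fun i => N i - m * r i) l atTop := by
  have half_tendsto : Tendsto (fun i => N i / 2) l atTop :=
    (Nat.tendsto_div_const_atTop two_ne_zero).comp hN
  refine tendsto_atTop_mono' l ?_ half_tendsto
  filter_upwards [eventually_mul_le_of_isLittleO_natCast hr (2 * m)] with i hi
  rw [mul_assoc] at hi
  omega

theorem isLittleO_choose_choose {j k : ℕ} (hjk : j < k) :
    (fun n : ℕ => (n.choose j : ℝ)) =o[atTop] fun n : ℕ => (n.choose k : ℝ) := by
  have pow_isLittleO : (fun n : ℕ => (n : ℝ) ^ j) =o[atTop] fun n : ℕ => (n : ℝ) ^ k :=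
    (isLittleO_pow_pow_atTop_of_lt hjk).comp_tendsto tendsto_natCast_atTop_atTop
  exact ((isTheta_choose j).trans_isLittleO pow_isLittleO).trans_isTheta (isTheta_choose k).symm

theorem tendsto_choose_atTop {k : ℕ} (hk : 0 < k) :
    Tendsto (fun n : ℕ => n.choose k) atTop atTop := by
  have one_isLittleO := isLittleO_choose_choose hk
  simp only [Nat.choose_zero_right, Nat.cast_one, isLittleO_one_left_iff,
    Real.norm_natCast] at one_isLittleO
  exact tendsto_natCast_atTop_iff.mp one_isLittleO

theorem isLittleO_mul_sub_choose (c d : ℕ) {k : ℕ} (hk : 1 < k) :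
    (fun n : ℕ => ((c * n - d : ℕ) : ℝ)) =o[atTop] fun n : ℕ => (n.choose k : ℝ) := by
  have linear_isBigO :
      (fun n : ℕ => ((c * n - d : ℕ) : ℝ)) =O[atTop] fun n : ℕ => (n.choose 1 : ℝ) := by
    refine IsBigO.of_bound c (Eventually.of_forall fun n => ?_)
    simp only [Real.norm_natCast, Nat.choose_one_right]
    exact_mod_cast Nat.sub_le (c * n) d
  exact linear_isBigO.trans_isLittleO (isLittleO_choose_choose hk)

theorem stmt_4_general {R : Type*} [SeminormedRing R] [NormOneClass R] (a : R) {b : R}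
    (hb : ‖b‖ < 1) (hN : Tendsto N l atTop)
    (hr : (fun i => (r i : ℝ)) =o[l] fun i => (N i : ℝ)) :
    Tendsto (fun i => ∑ k ∈ Finset.range (r i + 1),
        ((N i).choose k : R) * a ^ k * b ^ (N i - k)) l (𝓝 0) := by
  obtain ⟨y, hy₀, hy₁, m, sum_le⟩ :=
    exists_sum_range_choose_le_pow_sub (norm_nonneg a) (norm_nonneg b) hb
  have pow_tendsto : Tendsto (fun i => y ^ (N i - m * r i)) l (𝓝 0) :=
    (tendsto_pow_atTop_nhds_zero_of_lt_one hy₀.le hy₁).comp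
      (tendsto_sub_mul_atTop_of_isLittleO_natCast hN hr m)
  refine squeeze_zero_norm' ?_ pow_tendsto
  filter_upwards [eventually_mul_le_of_isLittleO_natCast hr m] with i hi
  exact (norm_sum_choose_mul_pow_mul_pow_le a b (N i) _).trans (sum_le (N i) (r i) hi)

end Growth

open Finset Filter in
/-- For fixed `0 < p ≤ 1`, the probability that the Gilbert random graph `G(n,p)` has
at most `5n - 15` edges tends to `0` as `n → ∞`. -/
theorem stmt_4 (p : ℝ) (hp0 : 0 < p) (hp1 : p ≤ 1) :
    Tendsto (fun n : ℕ =>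
        ∑ k ∈ range (5 * n - 15 + 1),
          ((n.choose 2).choose k : ℝ) * p ^ k * (1 - p) ^ (n.choose 2 - k))
      atTop (nhds 0) := by
  have hq : ‖1 - p‖ < 1 := by rw [Real.norm_of_nonneg] <;> linarith
  exact stmt_4_general p hq (tendsto_choose_atTop two_pos)
    (isLittleO_mul_sub_choose 5 15 one_lt_two)
end
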